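/- Let A and B be finite groups such that |B| is squarefree, and let F be a nilpotent normal subgroup of B (so F is a direct product of cyclic groups of distinct prime orders). Let π : A → GL(U) be a finite-dimensional complex representation of A, and let r be a prime such that |A × B| divides r − 1. Then there exist a finite field K of characteristic r and a finite-dimensional K-representation ρ : A × B → GL(V) such that: (1) for every a ∈ A, π(a) has no nonzero fixed vector in U if and only if ρ(a,1) has no nonzero fixed vector in V; (2) for every nontrivial f ∈ F, ρ(1,f) has no nonzero fixed vector in V. -/

import Mathlib

theorem aux_idem {R k d : Type*} [CommRing R] [IsDomain R] [Field k] [Fintype d] [DecidableEq d]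
    (φ : R →+* k) (N : ℕ) (hN : (N : k) ≠ 0) (E : Matrix d d R) (hE : E * E = (N : Matrix d d R) * E)
    (h0 : φ.mapMatrix E = 0) : E = 0 := by
  have h1 : ((N : Matrix d d R) - E) * E = 0 := by rw [sub_mul, hE, sub_self]
  have h2 : ((N : Matrix d d R) - E).det ≠ 0 := by
    intro h
    have := congrArg φ h
    rw [RingHom.map_det, map_sub, h0, map_zero, map_natCast, sub_zero,
      ← Matrix.diagonal_natCast, Matrix.det_diagonal] at this
    simp at this
    exact hN this.1
  have h3 := congrArg (fun X => ((N : Matrix d d R) - E).adjugate * X) h1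
  simp only [← mul_assoc, Matrix.adjugate_mul, mul_zero, smul_mul_assoc, one_mul] at h3
  ext i j
  have := congrFun (congrFun h3 i) j
  simpa [h2] using this

theorem aux_fix {K d : Type*} [Field K] [Fintype d] [DecidableEq d]
    (N : ℕ) (hN : (N : K) ≠ 0) (M : Matrix d d K) (hM : M ^ N = 1) :
    (∃ v : d → K, v ≠ 0 ∧ M.mulVec v = v) ↔ ∑ i ∈ Finset.range N, M ^ i ≠ 0 := by
  constructor
  · rintro ⟨v, hv, hMv⟩ h
    have h1 : ∀ i : ℕ, (M ^ i).mulVec v = v := by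
      intro i
      induction i with
      | zero => simp
      | succ i ih => rw [pow_succ, ← Matrix.mulVec_mulVec, hMv, ih]
    have h2 := congrArg (fun X => Matrix.mulVec X v) h
    simp only [Matrix.sum_mulVec, h1, Finset.sum_const, Finset.card_range, Matrix.zero_mulVec] at h2
    rw [← Nat.cast_smul_eq_nsmul K, smul_eq_zero] at h2
    exact h2.elim hN hv
  · intro h
    have h1 : M * ∑ i ∈ Finset.range N, M ^ i = ∑ i ∈ Finset.range N, M ^ i := by
      have := mul_geom_sum M N
      rw [hM, sub_self, sub_mul, one_mul, sub_eq_zero] at this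
      exact this
    by_contra hc
    push Not at hc
    apply h
    apply Matrix.toLin'.injective
    ext1 i
    ext1
    simp only [LinearMap.comp_apply, Matrix.toLin'_apply, map_zero, LinearMap.zero_apply]
    by_contra hne
    apply hc _ hne
    rw [Matrix.mulVec_mulVec, h1]

theorem aux_transfer {R k C d : Type*} [CommRing R] [IsDomain R] [Field k] [Field C] [Fintype d]
    [DecidableEq d] (φ : R →+* k) (ι : R →+* C)
    (N : ℕ) (hN : (N : k) ≠ 0) (hNC : (N : C) ≠ 0) (M : Matrix d d R) (hM : M ^ N = 1) :
    (∃ v : d → C, v ≠ 0 ∧ (ι.mapMatrix M).mulVec v = v) ↔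
      (∃ v : d → k, v ≠ 0 ∧ (φ.mapMatrix M).mulVec v = v) := by
  rw [aux_fix N hN _ (by rw [← map_pow, hM, map_one]),
    aux_fix N hNC _ (by rw [← map_pow, hM, map_one])]
  simp only [← map_pow, ← map_sum, ne_eq]
  have hE : (∑ i ∈ Finset.range N, M ^ i) * (∑ i ∈ Finset.range N, M ^ i)
      = (N : Matrix d d R) * (∑ i ∈ Finset.range N, M ^ i) := by
    have h1 : M * ∑ i ∈ Finset.range N, M ^ i = ∑ i ∈ Finset.range N, M ^ i := by
      have := mul_geom_sum M N
      rw [hM, sub_self, sub_mul, one_mul, sub_eq_zero] at this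
      exact this
    have h2 : ∀ i : ℕ, M ^ i * ∑ i ∈ Finset.range N, M ^ i = ∑ i ∈ Finset.range N, M ^ i := by
      intro i
      induction i with
      | zero => simp
      | succ i ih => rw [pow_succ, mul_assoc, h1, ih]
    rw [Finset.sum_mul, Finset.sum_congr rfl (fun i _ => h2 i)]
    simp
  refine not_congr ⟨fun h => ?_, fun h => ?_⟩
  · rw [aux_idem ι N hNC _ hE h, map_zero]
  · rw [aux_idem φ N hN _ hE h, map_zero]

theorem aux_val (r : ℕ) (hr : r.Prime) : ∃ O : ValuationSubring ℂ, ((r : ℂ)) ∈ O.nonunits := by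
  obtain ⟨B, -, hB⟩ := Ideal.image_subset_nonunits_valuationSubring
    (A := (Int.castRingHom ℂ).range) (Ideal.span {(r : (Int.castRingHom ℂ).range)}) (by
      rw [Ne, Ideal.span_singleton_eq_top]
      intro h
      obtain ⟨⟨_, z, rfl⟩, hz⟩ := h.exists_right_inv
      have := congrArg Subtype.val hz
      simp at this
      have h2 : (r : ℤ) * z = 1 := by exact_mod_cast this
      have h3 : (r : ℤ) ∣ 1 := ⟨z, h2.symm⟩
      have h4 := Int.natCast_dvd_natCast.mp (by simpa using h3 : (r : ℤ) ∣ ((1 : ℕ) : ℤ))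
      exact hr.one_lt.ne' (Nat.dvd_one.mp h4))
  exact ⟨B, hB ⟨(r : (Int.castRingHom ℂ).range), Ideal.subset_span rfl, by simp⟩⟩

theorem aux_lattice {A U : Type*} [Group A] [Finite A] [AddCommGroup U] [Module ℂ U]
    [FiniteDimensional ℂ U] (π : Representation ℂ A U) (O : ValuationSubring ℂ) :
    ∃ (d : ℕ) (b : Module.Basis (Fin d) ℂ U), ∀ a i j, LinearMap.toMatrix b b (π a) i j ∈ O := by
  classical
  let c := Module.finBasis ℂ U
  let S : Set U := Set.range (fun p : A × Fin (Module.finrank ℂ U) => π p.1 (c p.2))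
  let L : Submodule O U := Submodule.span O S
  have hfin : Module.Finite O L := Module.Finite.span_of_finite O (Set.finite_range _)
  have htf : Module.IsTorsionFree O L := by
    have : Module.IsTorsionFree O U := Module.IsTorsionFree.trans_faithfulSMul O ℂ U
    infer_instance
  have hflat : Module.Flat O L := by
    rw [Module.Flat.flat_iff_torsion_eq_bot_of_isBezout,
      ← Submodule.isTorsionFree_iff_torsion_eq_bot]
    exact htf
  have hfree : Module.Free O L := Module.free_of_flat_of_isLocalRing
  let e := Module.finBasis O L
  have hstab : ∀ a, ∀ u ∈ L, π a u ∈ L := by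
    intro a u hu
    induction hu using Submodule.span_induction with
    | mem x hx =>
      obtain ⟨p, rfl⟩ := hx
      refine Submodule.subset_span ⟨(a * p.1, p.2), ?_⟩
      simp
    | zero => simp
    | add x y _ _ hx hy => rw [map_add]; exact L.add_mem hx hy
    | smul t x _ hx =>
      have : π a (t • x) = t • π a x := (π a).map_smul (t : ℂ) x
      rw [this]; exact L.smul_mem _ hx
  have hli : LinearIndependent ℂ (fun i => (e i : U)) := by
    rw [← LinearIndependent.iff_fractionRing O ℂ]
    exact e.linearIndependent.map' L.subtype L.ker_subtype
  have hsum : ∀ x : L, (x : U) = ∑ i, ((e.repr x i : O) : ℂ) • (e i : U) := by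
    intro x
    conv_lhs => rw [← e.sum_repr x]
    rw [Submodule.coe_sum]
    rfl
  have hsp : ⊤ ≤ Submodule.span ℂ (Set.range (fun i => (e i : U))) := by
    rw [← c.span_eq, Submodule.span_le]
    rintro _ ⟨i, rfl⟩
    have hm : c i ∈ L := Submodule.subset_span ⟨(1, i), by simp⟩
    have hs := hsum ⟨c i, hm⟩
    change c i = _ at hs
    rw [hs]
    exact Submodule.sum_mem _ fun j _ => Submodule.smul_mem _ _ (Submodule.subset_span ⟨j, rfl⟩)
  let b := Module.Basis.mk hli hsp
  refine ⟨_, b, fun a i j => ?_⟩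
  rw [LinearMap.toMatrix_apply]
  have hbj : ∀ j, b j = (e j : U) := fun j => Module.Basis.mk_apply hli hsp j
  have h1 : π a (b j) = ∑ i, ((e.repr ⟨π a (e j), hstab a _ (e j).2⟩ i : O) : ℂ) • b i := by
    simp only [hbj]
    exact hsum ⟨π a (e j), hstab a _ (e j).2⟩
  rw [h1, b.repr_sum_self]
  exact Subtype.property _

theorem aux_field (r : ℕ) [Fact r.Prime] (O : ValuationSubring ℂ) (hO : (r : ℂ) ∈ O.nonunits)
    (S : Set ℂ) (hS : S.Finite) (hSO : S ⊆ O) :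
    ∃ n : ℕ, 1 ≤ n ∧ Nonempty (Algebra.adjoin ℤ S →+* GaloisField r n) := by
  let R := Algebra.adjoin ℤ S
  have hR : ∀ x ∈ R, x ∈ O := by
    intro x hx
    induction hx using Algebra.adjoin_induction with
    | mem x hx => exact hSO hx
    | algebraMap z => exact intCast_mem O z
    | add x y _ _ hx hy => exact add_mem hx hy
    | mul x y _ _ hx hy => exact mul_mem hx hy
  have hft : Algebra.FiniteType ℤ R :=
    (Subalgebra.fg_iff_finiteType _).mp ⟨hS.toFinset, by simp [R]⟩
  have hne : Ideal.span {(r : R)} ≠ ⊤ := by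
    rw [Ne, Ideal.span_singleton_eq_top]
    intro h
    obtain ⟨y, hy⟩ := h.exists_right_inv
    have h1 := congrArg Subtype.val hy
    simp at h1
    rw [ValuationSubring.mem_nonunits_iff_exists_mem_maximalIdeal] at hO
    obtain ⟨ha, hm⟩ := hO
    rw [IsLocalRing.mem_maximalIdeal] at hm
    apply hm
    exact IsUnit.of_mul_eq_one ⟨y, hR _ y.2⟩ (Subtype.ext h1)
  obtain ⟨M, hM, hle⟩ := Ideal.exists_le_maximal _ hne
  let k := R ⧸ M
  let _ : Field k := Ideal.Quotient.field M
  have hrk : (r : k) = 0 := by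
    have : (r : R) ∈ M := hle (Ideal.subset_span rfl)
    have h := Ideal.Quotient.eq_zero_iff_mem.mpr this
    simpa using h
  have hch : CharP k r := (CharP.charP_iff_prime_eq_zero Fact.out).mpr hrk
  let _ : Algebra (ZMod r) k := ZMod.algebra k r
  have h1 : Algebra.FiniteType ℤ k :=
    Algebra.FiniteType.of_surjective (Ideal.Quotient.mkₐ ℤ M) (Ideal.Quotient.mkₐ_surjective ℤ M)
  have h2 : Algebra.FiniteType (ZMod r) k := Algebra.FiniteType.of_restrictScalars_finiteType ℤ _ _
  have h3 : Module.Finite (ZMod r) k := finite_of_finite_type_of_isJacobsonRing _ _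
  have h4 : Finite k := Module.finite_of_finite (ZMod r)
  have h5 := FiniteField.pow_finrank_eq_natCard r k
  let f := GaloisField.algEquivGaloisField r _ h5.symm
  exact ⟨_, Module.finrank_pos (R := ZMod r) (M := k),
    ⟨f.toAlgHom.toRingHom.comp (Ideal.Quotient.mk M)⟩⟩

theorem aux_char (r : ℕ) [hr : Fact r.Prime] {F K : Type*} [Group F] [Finite F] [IsCyclic F]
    [Field K] [Algebra (ZMod r) K] (hd : Nat.card F ∣ r - 1) :
    ∃ χ : F →* Kˣ, Function.Injective χ := by
  obtain ⟨g, hg⟩ := IsCyclic.exists_generator (α := F)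
  have hcard : Nat.card (ZMod r)ˣ = r - 1 := by
    rw [Nat.card_eq_fintype_card, ZMod.card_units]
  obtain ⟨z, hz⟩ := IsCyclic.exists_ofOrder_eq_natCard (α := (ZMod r)ˣ)
  have hr1 : r - 1 ≠ 0 := Nat.sub_ne_zero_of_lt hr.out.one_lt
  obtain ⟨t, ht⟩ := hd
  have hogF : orderOf g = Nat.card F := orderOf_eq_card_of_forall_mem_zpowers hg
  have ht0 : t ≠ 0 := by rintro rfl; simp at ht; omega
  have ho : orderOf (z ^ t) = orderOf g := by
    rw [orderOf_pow_of_dvd ht0 (by rw [hz, hcard, ht]; exact dvd_mul_left _ _), hz, hcard, ht, hogF]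
    exact Nat.mul_div_cancel _ (Nat.pos_of_ne_zero ht0)
  let χ := monoidHomOfForallMemZpowers hg (g' := z ^ t) ho.dvd
  have hχ : Function.Injective χ := by
    rw [injective_iff_map_eq_one]
    intro a ha
    obtain ⟨m, rfl⟩ := Subgroup.mem_zpowers_iff.mp (hg a)
    rw [map_zpow, monoidHomOfForallMemZpowers_apply_gen, ← orderOf_dvd_iff_zpow_eq_one, ho,
      orderOf_dvd_iff_zpow_eq_one] at ha
    exact ha
  refine ⟨(Units.map (algebraMap (ZMod r) K).toMonoidHom).comp χ, ?_⟩
  rw [MonoidHom.coe_comp]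
  exact (Units.map_injective (algebraMap (ZMod r) K).injective).comp hχ

theorem aux_induce {A B K d : Type*} [Group A] [Group B] [Finite B] [Field K] [Fintype d]
    [DecidableEq d] (σ : A →* Matrix d d K) (F : Subgroup B) (hFn : F.Normal)
    (χ : F →* Kˣ) (hχ : Function.Injective χ) :
    ∃ (m : ℕ) (ρ : Representation K (A × B) (Fin m → K)),
      (∀ a : A, (∃ u : d → K, u ≠ 0 ∧ (σ a).mulVec u = u) ↔
        ∃ v : Fin m → K, v ≠ 0 ∧ ρ (a, 1) v = v) ∧
      (∀ f : B, f ∈ F → f ≠ 1 → ¬ ∃ v : Fin m → K, v ≠ 0 ∧ ρ (1, f) v = v) := by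
  classical
  let V : Submodule K (B → d → K) :=
    { carrier := {φ | ∀ (f : F) (b : B), φ (f * b) = (χ f : K) • φ b}
      add_mem' := by
        intro x y hx hy f b
        simp [hx f b, hy f b]
      zero_mem' := by intro f b; simp
      smul_mem' := by
        intro c x hx f b
        simp only [Pi.smul_apply, hx f b]
        rw [smul_comm] }
  let T : A × B → (V →ₗ[K] V) := fun p =>
    { toFun := fun φ => ⟨fun b => (σ p.1).mulVec (φ.1 (b * p.2)), by
        intro f b
        change (σ p.1).mulVec (φ.1 (f * b * p.2)) = _
        rw [mul_assoc, φ.2 f, Matrix.mulVec_smul]⟩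
      map_add' := by
        intro x y
        ext1; funext b
        exact Matrix.mulVec_add _ _ _
      map_smul' := by
        intro c x
        ext1; funext b
        exact Matrix.mulVec_smul (σ p.1) c (x.1 (b * p.2)) }
  have hT : ∀ p (φ : V) b, (T p φ).1 b = (σ p.1).mulVec (φ.1 (b * p.2)) := fun _ _ _ => rfl
  let ρ₀ : Representation K (A × B) V :=
    { toFun := T
      map_one' := by
        ext φ b : 3
        change (T 1 φ).1 b = φ.1 b
        rw [hT]; simp
      map_mul' := by
        intro p q
        ext φ b : 3
        change (T (p * q) φ).1 b = (T p (T q φ)).1 b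
        simp only [hT, Prod.fst_mul, Prod.snd_mul, map_mul, Matrix.mulVec_mulVec, mul_assoc] }
  have hρ₀ : ∀ p (φ : V) b, (ρ₀ p φ).1 b = (σ p.1).mulVec (φ.1 (b * p.2)) := fun _ _ _ => rfl
  let E := (Module.finBasis K V).equivFun
  let ρ : Representation K (A × B) (Fin (Module.finrank K V) → K) :=
    (E.conjAlgEquiv K).toAlgHom.toRingHom.toMonoidHom.comp ρ₀
  have hρ : ∀ p v, ρ p v = E (ρ₀ p (E.symm v)) := fun _ _ => rfl
  have key : ∀ p, (∃ v, v ≠ 0 ∧ ρ p v = v) ↔ ∃ φ : V, φ ≠ 0 ∧ ρ₀ p φ = φ := by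
    intro p
    constructor
    · rintro ⟨v, hv, h⟩
      refine ⟨E.symm v, by simpa using hv, ?_⟩
      rw [hρ] at h
      exact E.eq_symm_apply.mpr h
    · rintro ⟨φ, hv, h⟩
      exact ⟨E φ, by simpa using hv, by rw [hρ]; simp [h]⟩
  refine ⟨_, ρ, fun a => ?_, fun f hf hf1 => ?_⟩
  · rw [key]
    constructor
    · rintro ⟨u, hu, h⟩
      refine ⟨⟨fun b => if hb : b ∈ F then (χ ⟨b, hb⟩ : K) • u else 0, ?_⟩, ?_, ?_⟩
      · intro f b
        by_cases hb : b ∈ F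
        · have h2 : (f : B) * b ∈ F := F.mul_mem f.2 hb
          have h3 : (⟨f * b, h2⟩ : F) = f * ⟨b, hb⟩ := rfl
          simp only [hb, h2, dif_pos, h3, map_mul, Units.val_mul, mul_smul]
        · have h2 : (f : B) * b ∉ F := by rwa [F.mul_mem_cancel_left f.2]
          simp only [hb, h2, dif_neg, not_false_eq_true, smul_zero]
      · intro h0
        have h1 := congrFun (congrArg Subtype.val h0) 1
        have h2 : (⟨1, F.one_mem⟩ : F) = 1 := rfl
        simp [F.one_mem, h2] at h1
        exact hu h1
      · ext1; funext b
        rw [hρ₀]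
        by_cases hb : b ∈ F
        · simp [hb, Matrix.mulVec_smul, h]
        · simp [hb]
    · rintro ⟨φ, hφ, h⟩
      have : ∃ b, φ.1 b ≠ 0 := by
        by_contra hc
        push Not at hc
        exact hφ (Subtype.ext (funext hc))
      obtain ⟨b, hb⟩ := this
      refine ⟨φ.1 b, hb, ?_⟩
      have h1 := hρ₀ (a, 1) φ b
      rw [h] at h1
      simpa using h1.symm
  · rw [key]
    rintro ⟨φ, hφ, h⟩
    apply hφ
    ext1; funext b
    have h1 := hρ₀ (1, f) φ b
    rw [h] at h1
    simp only [map_one, Matrix.one_mulVec] at h1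
    have hc : b * f * b⁻¹ ∈ F := hFn.conj_mem f hf b
    have h2 := φ.2 ⟨b * f * b⁻¹, hc⟩ b
    simp only [inv_mul_cancel_right] at h2
    rw [← h1] at h2
    have h3 : ((χ ⟨b * f * b⁻¹, hc⟩ : K) - 1) • φ.1 b = 0 := by
      rw [sub_smul, one_smul, ← h2, sub_self]
    rcases smul_eq_zero.mp h3 with h4 | h4
    · exfalso
      have h5 : χ ⟨b * f * b⁻¹, hc⟩ = 1 := Units.ext (sub_eq_zero.mp h4)
      have h6 := congrArg Subtype.val (hχ (h5.trans χ.map_one.symm))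
      simp at h6
      exact hf1 h6
    · exact h4

/-- Given finite groups `A` and `B` with `|B|` squarefree, a nilpotent normal subgroup
`F` of `B`, a finite-dimensional complex representation `π` of `A`, and a prime `r`
with `|A × B| ∣ r - 1`, there is a finite field `K` of characteristic `r` and a
finite-dimensional `K`-representation `ρ` of `A × B` such that: (1) an element `a ∈ A`
acts fixed point freely under `π` iff `(a,1)` acts fixed point freely under `ρ`;
(2) every nontrivial element of `F` acts fixed point freely under `ρ`. -/
theorem representation_extension_fixed_point_free
    (A B : Type*) [Group A] [Group B] [Finite A] [Finite B]
    (hB : Squarefree (Nat.card B))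
    (F : Subgroup B) (hFn : F.Normal) (hFnil : Group.IsNilpotent F)
    (U : Type*) [AddCommGroup U] [Module ℂ U] [FiniteDimensional ℂ U]
    (π : Representation ℂ A U)
    (r : ℕ) [hr : Fact r.Prime] (hdvd : Nat.card (A × B) ∣ r - 1) :
    ∃ (n : ℕ), 1 ≤ n ∧
      ∃ (m : ℕ) (ρ : Representation (GaloisField r n) (A × B) (Fin m → GaloisField r n)),
        (∀ a : A,
          (¬ ∃ u : U, u ≠ 0 ∧ π a u = u) ↔
            (¬ ∃ v : Fin m → GaloisField r n, v ≠ 0 ∧ ρ (a, 1) v = v)) ∧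
        (∀ f : B, f ∈ F → f ≠ 1 →
          ¬ ∃ v : Fin m → GaloisField r n, v ≠ 0 ∧ ρ (1, f) v = v) := by
  classical
  have hcard : Nat.card A * Nat.card B ∣ r - 1 := by rwa [Nat.card_prod] at hdvd
  obtain ⟨O, hO⟩ := aux_val r hr.out
  obtain ⟨d, b, hb⟩ := aux_lattice π O
  let S : Set ℂ := Set.range (fun p : A × Fin d × Fin d =>
    LinearMap.toMatrix b b (π p.1) p.2.1 p.2.2)
  have hSO : S ⊆ O := by
    rintro _ ⟨p, rfl⟩
    exact hb _ _ _
  obtain ⟨n, hn, ⟨φ⟩⟩ := aux_field r O hO S (Set.finite_range _) hSO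
  let R := Algebra.adjoin ℤ S
  let ι : R →+* ℂ := R.val.toRingHom
  have hι : Function.Injective ι := Subtype.val_injective
  have hιM : Function.Injective (ι.mapMatrix (m := Fin d)) := by
    intro X Y h
    refine Matrix.ext fun i j => ?_
    exact hι (congrFun (congrFun h i) j)
  let M : A → Matrix (Fin d) (Fin d) R := fun a i j =>
    ⟨LinearMap.toMatrix b b (π a) i j, Algebra.subset_adjoin ⟨(a, i, j), rfl⟩⟩
  have hM : ∀ a, ι.mapMatrix (M a) = LinearMap.toMatrix b b (π a) := fun a => rfl
  let τ : A →* Matrix (Fin d) (Fin d) R :=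
    { toFun := M
      map_one' := by
        apply hιM
        rw [hM, map_one π, map_one ι.mapMatrix]
        exact LinearMap.toMatrix_one b
      map_mul' := by
        intro x y
        apply hιM
        rw [map_mul, hM, hM, hM, map_mul]
        exact LinearMap.toMatrix_mul b _ _ }
  have hsq : Squarefree (Nat.card F) := hB.squarefree_of_dvd F.card_subgroup_dvd_card
  have hZ : IsZGroup F := IsZGroup.of_squarefree hsq
  have hcyc : IsCyclic F := inferInstance
  obtain ⟨χ, hχ⟩ := aux_char r (F := F) (K := GaloisField r n)
    ((F.card_subgroup_dvd_card.trans (dvd_mul_left _ _)).trans hcard)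
  let σ : A →* Matrix (Fin d) (Fin d) (GaloisField r n) := (φ.mapMatrix.toMonoidHom).comp τ
  obtain ⟨m, ρ, h1, h2⟩ := aux_induce σ F hFn χ hχ
  refine ⟨n, hn, m, ρ, fun a => not_congr ?_, h2⟩
  rw [← h1]
  have hAd : Nat.card A ∣ r - 1 := (dvd_mul_right _ _).trans hcard
  have hr1 : 0 < r - 1 := Nat.sub_pos_of_lt hr.out.one_lt
  have hNk : ((Nat.card A : ℕ) : GaloisField r n) ≠ 0 := by
    rw [Ne, CharP.cast_eq_zero_iff (GaloisField r n) r]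
    intro h
    have := Nat.le_of_dvd hr1 (h.trans hAd)
    omega
  have hNC : ((Nat.card A : ℕ) : ℂ) ≠ 0 := Nat.cast_ne_zero.mpr Nat.card_pos.ne'
  have h3 := aux_transfer φ ι (Nat.card A) hNk hNC (τ a)
    (by rw [← map_pow, pow_card_eq_one', map_one])
  refine Iff.trans ?_ h3
  have h4 : ι.mapMatrix (τ a) = LinearMap.toMatrix b b (π a) := hM a
  rw [h4]
  constructor
  · rintro ⟨u, hu, h⟩
    refine ⟨b.repr u, by simpa using hu, ?_⟩
    rw [LinearMap.toMatrix_mulVec_repr, h]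
  · rintro ⟨v, hv, h⟩
    refine ⟨b.equivFun.symm v, (LinearEquiv.map_ne_zero_iff _).mpr hv, ?_⟩
    apply b.equivFun.injective
    have h5 := LinearMap.toMatrix_mulVec_repr b b (π a) (b.equivFun.symm v)
    have h6 : (b.repr (b.equivFun.symm v) : Fin d → ℂ) = v := b.equivFun.apply_symm_apply v
    rw [h6, h] at h5
    rw [LinearEquiv.apply_symm_apply]
    exact h5.symm
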